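/- Let n ≥ 2 and let 0 ≤ s < t be real numbers with H_n'(s) = 0 and H_n'(t) = 0. Then |H_n(s)| < |H_n(t)|; that is, the successive relative maxima of |H_n| form an increasing sequence on [0,∞). -/

import Mathlib

/-- The physicist's Hermite polynomials: `H 0 = 1`, `H 1 = 2X`,
`H (n+2) = 2X · H (n+1) - 2(n+1) · H n`. -/
noncomputable def H : ℕ → Polynomial ℝ
  | 0 => 1
  | 1 => Polynomial.C 2 * Polynomial.X
  | n + 2 => Polynomial.C 2 * Polynomial.X * H (n + 1) - Polynomial.C (2 * (n + 1) : ℝ) * H n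

/-!
Sonin's argument: if `a p'' + b p' + λ p = 0` with `λ` constant, then the derivative of
`λ p² + a p'²` is `(a' - 2b) p'²`, so this function increases wherever `a' - 2b ≥ 0`, while at
critical points of `p` it reduces to `λ p²`. Hermite's equation `y'' - 2xy' + 2ny = 0` has
`a' - 2b = 4x`.
-/

section

open Polynomial Set

theorem strictMonoOn_eval_of_derivative_nonneg {p : ℝ[X]} {D : Set ℝ} (hD : Convex ℝ D)
    (hp : derivative p ≠ 0) (hp' : ∀ x ∈ interior D, 0 ≤ (derivative p).eval x) :
    StrictMonoOn (fun x => p.eval x) D := by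
  have hmono : MonotoneOn (fun x => p.eval x) D :=
    monotoneOn_of_deriv_nonneg hD p.continuousOn p.differentiableOn
      fun x hx => by simpa only [Polynomial.deriv] using hp' x hx
  intro x hx y hy hxy
  refine (hmono hx hy hxy.le).lt_of_ne fun heq => hp ?_
  have hconst : ∀ z ∈ Icc x y, p.eval z = p.eval x := fun z hz =>
    have hzD : z ∈ D := hD.ordConnected.out hx hy hz
    le_antisymm ((hmono hzD hy hz.2).trans_eq heq.symm) (hmono hx hzD hz.1)
  have hpC : p = C (p.eval x) := eq_of_infinite_eval_eq _ _ <|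
    (Icc_infinite hxy).mono fun z hz => (hconst z hz).trans eval_C.symm
  rw [hpC, derivative_C]

/-- The Sonin function `l p² + a p'²` of a solution `p` of `a p'' + b p' + l p = 0`, whose
monotonicity governs the size of `p` at its critical points. It is `l` times the usual
normalization `p² + a p'² / l`, to avoid the division. -/
noncomputable def soninFunction {R : Type*} [Semiring R] (a : R[X]) (l : R) (p : R[X]) : R[X] :=
  C l * p ^ 2 + a * derivative p ^ 2

theorem eval_soninFunction_of_eval_derivative_eq_zero {R : Type*} [CommSemiring R] (a : R[X])
    (l : R) {p : R[X]} {x : R} (hx : (derivative p).eval x = 0) :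
    (soninFunction a l p).eval x = l * p.eval x ^ 2 := by
  simp [soninFunction, hx]

theorem derivative_soninFunction {R : Type*} [CommRing R] {a b p : R[X]} {l : R}
    (hode : a * derivative (derivative p) + b * derivative p + C l * p = 0) :
    derivative (soninFunction a l p) = (derivative a - 2 * b) * derivative p ^ 2 := by
  simp only [soninFunction, derivative_add, derivative_mul, derivative_C, derivative_sq,
    map_ofNat]
  linear_combination 2 * derivative p * hode

theorem strictMonoOn_eval_soninFunction {a b p : ℝ[X]} {l : ℝ} {D : Set ℝ} (hD : Convex ℝ D)
    (hode : a * derivative (derivative p) + b * derivative p + C l * p = 0)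
    (hp : derivative p ≠ 0) (hab : derivative a - 2 * b ≠ 0)
    (hab' : ∀ x ∈ interior D, 0 ≤ (derivative a - 2 * b).eval x) :
    StrictMonoOn (fun x => (soninFunction a l p).eval x) D := by
  apply strictMonoOn_eval_of_derivative_nonneg hD <;> rw [derivative_soninFunction hode]
  · exact mul_ne_zero hab (pow_ne_zero 2 hp)
  · intro x hx
    rw [eval_mul, eval_pow]
    exact mul_nonneg (hab' x hx) (sq_nonneg _)

theorem strictMonoOn_abs_eval_critical_points {a b p : ℝ[X]} {l : ℝ} {D : Set ℝ}
    (hD : Convex ℝ D) (hl : 0 < l)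
    (hode : a * derivative (derivative p) + b * derivative p + C l * p = 0)
    (hp : p ≠ 0) (hab : derivative a - 2 * b ≠ 0)
    (hab' : ∀ x ∈ interior D, 0 ≤ (derivative a - 2 * b).eval x) :
    StrictMonoOn (fun x => |p.eval x|) {x ∈ D | (derivative p).eval x = 0} := by
  rintro s ⟨hsD, hs⟩ t ⟨htD, ht⟩ hst
  have hp' : derivative p ≠ 0 := fun h => hp <| by simpa [h, hl.ne'] using hode
  have hlt := strictMonoOn_eval_soninFunction hD hode hp' hab hab' hsD htD hst
  simp only [eval_soninFunction_of_eval_derivative_eq_zero _ _ hs,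
    eval_soninFunction_of_eval_derivative_eq_zero _ _ ht] at hlt
  exact sq_lt_sq.1 (lt_of_mul_lt_mul_left hlt hl.le)

theorem H_zero : H 0 = 1 := rfl

theorem H_one : H 1 = 2 * X := rfl

theorem H_add_two (n : ℕ) : H (n + 2) = 2 * X * H (n + 1) - 2 * ((n : ℝ[X]) + 1) * H n := by
  simp only [H, C_mul, C_add, C_1, map_ofNat, map_natCast]

theorem derivative_H_add_two (n : ℕ) :
    derivative (H (n + 2)) = 2 * H (n + 1) + 2 * X * derivative (H (n + 1)) -
      2 * ((n : ℝ[X]) + 1) * derivative (H n) := by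
  simp only [H_add_two, derivative_sub, derivative_mul, derivative_add, derivative_X,
    derivative_natCast, derivative_ofNat, derivative_one]
  ring

theorem derivative_H_succ (n : ℕ) : derivative (H (n + 1)) = 2 * ((n : ℝ[X]) + 1) * H n := by
  induction n using Nat.twoStepInduction with
  | zero => simp [H_zero, H_one]
  | one =>
    simp only [derivative_H_add_two, zero_add, H_zero, H_one, derivative_mul, derivative_X,
      derivative_ofNat, derivative_one, Nat.cast_one]
    ring
  | more n ih ih' =>
    rw [derivative_H_add_two, ih, ih']
    push_cast
    linear_combination (-2 * ((n : ℝ[X]) + 2)) * H_add_two n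

theorem H_succ (n : ℕ) : H (n + 1) = 2 * X * H n - derivative (H n) := by
  cases n with
  | zero => rw [H_zero, H_one, derivative_one, mul_one, sub_zero]
  | succ n => rw [H_add_two, derivative_H_succ]

theorem derivative_derivative_H (n : ℕ) :
    derivative (derivative (H n)) = 2 * X * derivative (H n) - 2 * (n : ℝ[X]) * H n := by
  have h := congrArg derivative (H_succ n)
  simp only [derivative_H_succ, derivative_sub, derivative_mul, derivative_ofNat,
    derivative_X] at h
  linear_combination h

theorem H_ne_zero (n : ℕ) : H n ≠ 0 := by
  induction n with
  | zero => exact one_ne_zero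
  | succ n ih =>
    have hcoeff : 2 * ((n : ℝ[X]) + 1) ≠ 0 := mod_cast (by positivity : 2 * (n + 1) ≠ 0)
    intro h
    exact mul_ne_zero hcoeff ih (by rw [← derivative_H_succ, h, derivative_zero])

theorem strictMonoOn_abs_eval_H_critical_points {n : ℕ} (hn : n ≠ 0) :
    StrictMonoOn (fun x => |(H n).eval x|) {x ∈ Ici 0 | (derivative (H n)).eval x = 0} := by
  have hode : 1 * derivative (derivative (H n)) + -2 * X * derivative (H n) +
      C (2 * n : ℝ) * H n = 0 := by
    rw [derivative_derivative_H, C_mul, map_ofNat, map_natCast]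
    ring
  refine strictMonoOn_abs_eval_critical_points (convex_Ici 0) (by positivity) hode (H_ne_zero n)
    (by simp) fun x hx => ?_
  rw [interior_Ici] at hx
  simpa using hx.le

end

/-- **Lemma 2.1 (Szegő, Theorem 7.6.1).** The successive relative maxima of `|H_n|`
form an increasing sequence on `[0,∞)`: if `0 ≤ s < t` are critical points of `H_n`
then `|H_n(s)| < |H_n(t)|`. -/
theorem abs_hermite_increasing_at_critical_points (n : ℕ) (hn : 2 ≤ n) (s t : ℝ)
    (hs : 0 ≤ s) (hst : s < t)
    (hs' : (Polynomial.derivative (H n)).eval s = 0)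
    (ht' : (Polynomial.derivative (H n)).eval t = 0) :
    |(H n).eval s| < |(H n).eval t| :=
  strictMonoOn_abs_eval_H_critical_points (by lia) ⟨hs, hs'⟩ ⟨hs.trans hst.le, ht'⟩ hst
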